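/- arXiv:2003.07164 — 3 statements merged into one kernel-verified Lean document; each statement's English description precedes it below -/
import Mathlib

section
/- Let ω = exp(2πi/3) and define on ℂ³ (indexed by ZMod 3) the operators X e_n = e_{n+1}, Z e_n = ω^n e_n, D_{(u,v)} = ω^{2uv} X^u Z^v, A_{(0,0)} = (1/3) Σ_{u,v} D_{(u,v)}, A_χ = D_χ A_{(0,0)} D_χ†, and W_χ(v) = (1/3)⟨v, A_χ v⟩. Then for every unit vector v ∈ ℂ³ and every affine line L in the phase space (ZMod 3)² (i.e., L = {χ₀ + t·δ : t ∈ ZMod 3} for some χ₀ and some δ ≠ 0), the sum Σ_{χ ∈ L} W_χ(v) is nonnegative. In particular, the discrete Wigner function of a pure qutrit state cannot be negative at three collinear phase space points. -/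
open scoped BigOperators
open Complex Matrix

noncomputable def omg (p : ℕ) : ℂ := Complex.exp (2 * Real.pi * Complex.I / p)

noncomputable def Hmat (p : ℕ) : Matrix (ZMod p) (ZMod p) ℂ :=
  Matrix.of fun j k => (Real.sqrt p : ℂ)⁻¹ * omg p ^ ((j * k : ZMod p).val)

noncomputable def VS (p : ℕ) : Matrix (ZMod p) (ZMod p) ℂ :=
  Matrix.diagonal fun k => omg p ^ (((2 : ZMod p)⁻¹ * k ^ 2).val)

def Xmat (p : ℕ) : Matrix (ZMod p) (ZMod p) ℂ :=
  Matrix.of fun j k => if j = k + 1 then 1 else 0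

noncomputable def Zmat (p : ℕ) : Matrix (ZMod p) (ZMod p) ℂ :=
  Matrix.diagonal fun k => omg p ^ (k.val)

noncomputable def Dmat (p : ℕ) [NeZero p] (u v : ZMod p) : Matrix (ZMod p) (ZMod p) ℂ :=
  omg p ^ (((2 : ZMod p)⁻¹ * u * v).val) • (Xmat p ^ u.val * Zmat p ^ v.val)

noncomputable def A0 (p : ℕ) [NeZero p] : Matrix (ZMod p) (ZMod p) ℂ :=
  (p : ℂ)⁻¹ • ∑ u : ZMod p, ∑ v : ZMod p, Dmat p u v

noncomputable def Amat (p : ℕ) [NeZero p] (χ : ZMod p × ZMod p) : Matrix (ZMod p) (ZMod p) ℂ :=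
  Dmat p χ.1 χ.2 * A0 p * (Dmat p χ.1 χ.2)ᴴ

noncomputable def W (p : ℕ) [NeZero p] (χ : ZMod p × ZMod p) (v : ZMod p → ℂ) : ℂ :=
  (p : ℂ)⁻¹ * (star v ⬝ᵥ (Amat p χ).mulVec v)

def Pmat (p : ℕ) : Matrix (ZMod p) (ZMod p) ℂ :=
  Matrix.of fun j k => if j = -k then 1 else 0

open scoped ComplexOrder


/-- The additive character `x ↦ ω ^ x` of `ZMod 3`. -/
noncomputable def ech (x : ZMod 3) : ℂ := omg 3 ^ x.val

lemma omg_cube : omg 3 ^ 3 = 1 := by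
  unfold omg
  rw [← Complex.exp_nat_mul]
  rw [← Complex.exp_two_pi_mul_I]
  congr 1
  push_cast
  ring

lemma omg_sum : 1 + omg 3 + omg 3 ^ 2 = 0 := by
  have h := Complex.isPrimitiveRoot_exp 3 (by norm_num)
  have h2 := h.geom_sum_eq_zero (by norm_num)
  simp only [Finset.sum_range_succ, Finset.sum_range_zero] at h2
  unfold omg
  linear_combination h2

lemma omg_star : star (omg 3) * omg 3 = 1 := by
  unfold omg
  rw [Complex.star_def, ← Complex.exp_conj, ← Complex.exp_add]
  rw [← Complex.exp_zero]
  congr 1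
  simp only [map_div₀, map_mul, Complex.conj_ofReal, Complex.conj_I, map_ofNat, map_natCast]
  ring

lemma ech_add (x y : ZMod 3) : ech (x + y) = ech x * ech y := by
  unfold ech
  rw [← pow_add, ZMod.val_add]
  conv_rhs => rw [← Nat.mod_add_div (x.val + y.val) 3]
  rw [pow_add, pow_mul, omg_cube]
  simp

lemma ech_zero : ech 0 = 1 := by simp [ech]

lemma ech_star (x : ZMod 3) : star (ech x) = ech (-x) := by
  have h1 : star (ech x) * ech x = 1 := by
    unfold ech
    rw [star_pow, ← mul_pow, omg_star, one_pow]
  have h2 : ech (-x) * ech x = 1 := by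
    rw [← ech_add, neg_add_cancel, ech_zero]
  have h3 : ech x ≠ 0 := fun h => by simp [h] at h2
  exact mul_right_cancel₀ h3 (h1.trans h2.symm)

lemma ech_pow (x y : ZMod 3) : ech x ^ y.val = ech (x * y) := by
  have : ∀ n : ℕ, ech x ^ n = ech (x * n) := by
    intro n
    induction n with
    | zero => simp [ech_zero]
    | succ k ih => rw [pow_succ, ih, ← ech_add]; congr 1; push_cast; ring
  rw [this]; simp

lemma ech_sum (c : ZMod 3) (hc : c ≠ 0) : ∑ t : ZMod 3, ech (t * c) = 0 := by
  rw [show ∑ t : ZMod 3, ech (t * c) = ∑ t : ZMod 3, ech t from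
    Fintype.sum_equiv (Equiv.mulRight₀ c hc) _ _ (fun t => rfl)]
  have h := omg_sum
  have hs : ∑ t : ZMod 3, ech t = ech 0 + ech 1 + ech 2 := Fin.sum_univ_three (fun t : Fin 3 => ech t)
  rw [hs]
  change omg 3 ^ 0 + omg 3 ^ 1 + omg 3 ^ 2 = 0
  linear_combination h

lemma X_pow (n : ℕ) (j k : ZMod 3) : (Xmat 3 ^ n) j k = if j = k + n then 1 else 0 := by
  induction n generalizing j k with
  | zero => simp [Matrix.one_apply]
  | succ m ih =>
    rw [pow_succ, Matrix.mul_apply]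
    have hX : ∀ x, Xmat 3 x k = if x = k + 1 then 1 else 0 := fun x => rfl
    simp only [ih, hX, mul_ite, mul_one, mul_zero, Finset.sum_ite_eq', Finset.mem_univ, if_true]
    congr 1
    push_cast
    rw [add_assoc, add_comm (1 : ZMod 3)]

lemma D_apply (u v j k : ZMod 3) :
    Dmat 3 u v j k = if j = k + u then ech (2 * u * v + k * v) else 0 := by
  have h2 : (2 : ZMod 3)⁻¹ = 2 := inv_eq_of_mul_eq_one_right (by decide)
  unfold Dmat Zmat
  rw [Matrix.diagonal_pow, Matrix.smul_apply, Matrix.mul_diagonal, X_pow, h2, ech_add, ← ech_pow k v]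
  simp [ech]

lemma A0_apply (j k : ZMod 3) : A0 3 j k = if j + k = 0 then 1 else 0 := by
  unfold A0
  simp only [Matrix.smul_apply, Matrix.sum_apply, D_apply]
  rw [Finset.sum_comm]
  have : ∀ v u : ZMod 3, (if j = k + u then ech (2 * u * v + k * v) else 0)
      = if j - k = u then ech (v * (2 * u + k)) else 0 := by
    intro v u
    have : (j = k + u) ↔ (j - k = u) := by rw [sub_eq_iff_eq_add, add_comm]
    simp only [this]
    congr 2
    ring
  simp only [this, Finset.sum_ite_eq, Finset.mem_univ, if_true]
  have h3 : 2 * (j - k) + k = -(j + k) := by clear this; revert j k; decide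
  rw [h3]
  by_cases h : j + k = 0
  · simp [h, ech_zero]
  · rw [ech_sum _ (neg_ne_zero.mpr h)]; simp [h]

lemma A_apply (a b j k : ZMod 3) :
    Amat 3 (a, b) j k = if j + k = 2 * a then ech (b * (j - k)) else 0 := by
  unfold Amat
  simp only [Matrix.mul_apply, Matrix.conjTranspose_apply, D_apply, A0_apply]
  have e1 : ∀ x : ZMod 3, (j = x + a) ↔ (x = j - a) := fun x => by
    rw [eq_sub_iff_add_eq, eq_comm]
  have e2 : ∀ x : ZMod 3, (k = x + a) ↔ (x = k - a) := fun x => by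
    rw [eq_sub_iff_add_eq, eq_comm]
  simp only [e1, e2, ite_mul, zero_mul, Finset.sum_ite_eq', Finset.mem_univ, if_true]
  simp only [apply_ite star, star_zero, mul_ite, mul_zero, Finset.sum_ite_eq', Finset.mem_univ,
    if_true, mul_one]
  simp only [ite_mul, zero_mul]
  have e3 : (j - a + (k - a) = 0) ↔ (j + k = 2 * a) := by
    rw [← sub_eq_zero (a := j + k)]
    ring_nf
  simp only [e3]
  split_ifs with h
  · rw [ech_star, ← ech_add]; congr 1; ring
  · rfl

lemma line_entry (a b c d j k : ZMod 3) (hc : c ≠ 0) :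
    ∑ t : ZMod 3, Amat 3 (a + t * c, b + t * d) j k
      = ech ((b - c * d * a) * j - c * d * j ^ 2)
        * star (ech ((b - c * d * a) * k - c * d * k ^ 2)) := by
  have hcc : ∀ t : ZMod 3, (j + k = 2 * (a + t * c)) ↔ (t = c * (-(j + k) - a)) := by
    revert a c j k; decide
  simp only [A_apply, hcc, Finset.sum_ite_eq', Finset.mem_univ, if_true]
  rw [ech_star, ← ech_add]
  congr 1
  ring

lemma line_entry' (a b d j k : ZMod 3) (hd : d ≠ 0) :
    ∑ t : ZMod 3, Amat 3 (a, b + t * d) j k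
      = if j = a then (if k = a then 3 else 0) else 0 := by
  simp only [A_apply]
  by_cases hjk : j = k
  · subst hjk
    have : (j + j = 2 * a) ↔ j = a := by revert j a; decide
    simp only [this, sub_self, mul_zero, ech_zero]
    split_ifs <;> simp
  · have h0 : ∑ t : ZMod 3, ech ((b + t * d) * (j - k)) = 0 := by
      have : ∀ t, ech ((b + t * d) * (j - k)) = ech (b * (j - k)) * ech (t * (d * (j - k))) := by
        intro t; rw [← ech_add]; congr 1; ring
      simp only [this, ← Finset.mul_sum]
      rw [ech_sum _ (mul_ne_zero hd (sub_ne_zero.mpr hjk)), mul_zero]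
    have h1 : ¬ (j = a ∧ k = a) := fun h => hjk (h.1.trans h.2.symm)
    by_cases h : j + k = 2 * a
    · simp only [h, if_true, h0]
      split_ifs <;> tauto
    · simp only [h, if_false, Finset.sum_const_zero]
      split_ifs <;> tauto

/-- A line sum is a nonnegative multiple of `|⟨v, φ⟩|²` as soon as the summed phase point
operators have rank-one form. -/
lemma sum_rank_one (v φ : ZMod 3 → ℂ) (r : ℂ) (hr : 0 ≤ r) (χ : ZMod 3 → ZMod 3 × ZMod 3)
    (h : ∀ j k, ∑ t : ZMod 3, Amat 3 (χ t) j k = r * (φ j * star (φ k))) :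
    0 ≤ ∑ t : ZMod 3, W 3 (χ t) v := by
  have key : ∑ t : ZMod 3, W 3 (χ t) v
      = (3 : ℂ)⁻¹ * (r * (star (∑ k, star (φ k) * v k) * ∑ k, star (φ k) * v k)) := by
    unfold W
    rw [← Finset.mul_sum]
    congr 1
    rw [← dotProduct_sum, ← Matrix.sum_mulVec]
    simp only [dotProduct, Matrix.mulVec, Matrix.sum_apply, h, star_sum, Finset.sum_mul,
      Finset.mul_sum, Pi.star_apply, star_mul', star_star]
    rw [Finset.sum_comm]
    refine Finset.sum_congr rfl fun k _ => Finset.sum_congr rfl fun j _ => ?_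
    ring
  rw [key]
  have h3 : (0 : ℂ) ≤ (3 : ℂ)⁻¹ := by
    rw [show (3 : ℂ)⁻¹ = ((3⁻¹ : ℝ) : ℂ) by push_cast; rfl]
    exact Complex.zero_le_real.mpr (by norm_num)
  exact mul_nonneg h3 (mul_nonneg hr (star_mul_self_nonneg _))

theorem wigner_sum_along_line_nonneg (v : ZMod 3 → ℂ) (hv : star v ⬝ᵥ v = 1)
    (χ₀ δ : ZMod 3 × ZMod 3) (hδ : δ ≠ 0) :
    0 ≤ ∑ t : ZMod 3, W 3 (χ₀ + t • δ) v ∧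
    ¬ ∀ t : ZMod 3, W 3 (χ₀ + t • δ) v < 0 := by
  have main : 0 ≤ ∑ t : ZMod 3, W 3 (χ₀ + t • δ) v := by
    obtain ⟨a, b⟩ := χ₀
    obtain ⟨c, d⟩ := δ
    by_cases hc : c = 0
    · subst hc
      have hd : d ≠ 0 := fun h => hδ (by rw [h]; rfl)
      refine sum_rank_one v (fun j => if j = a then 1 else 0) 3 (by norm_num) _ fun j k => ?_
      have := line_entry' a b d j k hd
      simp only [Prod.smul_mk, Prod.mk_add_mk, smul_eq_mul, mul_zero, add_zero]
      rw [this]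
      split_ifs <;> simp
    · refine sum_rank_one v (fun j => ech ((b - c * d * a) * j - c * d * j ^ 2)) 1
        zero_le_one _ fun j k => ?_
      rw [one_mul]
      exact line_entry a b c d j k hc
  refine ⟨main, fun h => ?_⟩
  have : ∑ t : ZMod 3, W 3 (χ₀ + t • δ) v < 0 :=
    Finset.sum_neg (fun t _ => h t) Finset.univ_nonempty
  exact absurd main (not_le_of_gt this)
end

section
/- Let G be the semidirect product (ZMod 3)² ⋊ SL(2, ZMod 3), where SL(2, ZMod 3) acts on (ZMod 3)² by matrix-vector multiplication. Then G has exactly 10 conjugacy classes. -/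
open Matrix

/-- The action of `SL(2, ZMod p)` on `(ZMod p)²` (written multiplicatively) by
matrix-vector multiplication, as a homomorphism into the automorphism group. -/
noncomputable def slAction (p : ℕ) [Fact p.Prime] :
    Matrix.SpecialLinearGroup (Fin 2) (ZMod p) →*
      MulAut (Multiplicative (Fin 2 → ZMod p)) where
  toFun A := AddEquiv.toMultiplicative
    (Matrix.SpecialLinearGroup.toLin' A).toAddEquiv
  map_one' := by
    ext x
    simp only [_root_.map_one]
    rfl
  map_mul' A B := by
    ext x
    simp only [_root_.map_mul]
    rfl

/-- The semidirect product `(ZMod p)² ⋊ SL(2, ZMod p)`. -/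
noncomputable def SemidirectGroup (p : ℕ) [Fact p.Prime] :=
  SemidirectProduct (Multiplicative (Fin 2 → ZMod p))
    (Matrix.SpecialLinearGroup (Fin 2) (ZMod p)) (slAction p)

noncomputable instance (p : ℕ) [Fact p.Prime] : Group (SemidirectGroup p) :=
  inferInstanceAs (Group (SemidirectProduct _ _ _))

/-- A complete conjugacy invariant, on the coordinates of the element `((x, y), !![a, b; c, d])`. -/
def classInv (a b c d x y : ZMod 3) : Fin 10 :=
  if b = 0 ∧ c = 0 then
    if a = 1 then (if x = 0 ∧ y = 0 then 0 else 1) else 2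
  else if a + d = 0 then 3
  else if a + d = 1 then
    (if c = 1 ∨ (c = 0 ∧ b = 2) then 4 else 5)
  else if c = 1 ∨ (c = 0 ∧ b = 2) then
    -- membership of `(x, y)` in the image of `A - 1`
    (if (a - 1) * y = c * x ∧ b * y = (d - 1) * x then 6 else 7)
  else
    (if (a - 1) * y = c * x ∧ b * y = (d - 1) * x then 8 else 9)

/-- Coordinates of class representatives. -/
def repCoord (i : Fin 10) : ZMod 3 × ZMod 3 × ZMod 3 × ZMod 3 × ZMod 3 × ZMod 3 :=
  match i with
  | 0 => (1, 0, 0, 1, 0, 0)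
  | 1 => (1, 0, 0, 1, 1, 0)
  | 2 => (2, 0, 0, 2, 0, 0)
  | 3 => (0, 2, 1, 0, 0, 0)
  | 4 => (2, 0, 1, 2, 0, 0)
  | 5 => (2, 0, 2, 2, 0, 0)
  | 6 => (1, 0, 1, 1, 0, 0)
  | 7 => (1, 0, 1, 1, 1, 0)
  | 8 => (1, 0, 2, 1, 0, 0)
  | 9 => (1, 0, 2, 1, 1, 0)

lemma classInv_rep : ∀ i : Fin 10,
    classInv (repCoord i).1 (repCoord i).2.1 (repCoord i).2.2.1 (repCoord i).2.2.2.1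
      (repCoord i).2.2.2.2.1 (repCoord i).2.2.2.2.2 = i := by
  decide +kernel

lemma rep_det : ∀ i : Fin 10,
    (repCoord i).1 * (repCoord i).2.2.2.1 - (repCoord i).2.1 * (repCoord i).2.2.1 = 1 := by
  decide +kernel

lemma classInv_translate : ∀ a b c d : ZMod 3, a * d - b * c = 1 → ∀ x y u v : ZMod 3,
    classInv a b c d (u + x - (a * u + b * v)) (v + y - (c * u + d * v)) =
      classInv a b c d x y := by
  decide +kernel

lemma classInv_linear : ∀ e f g h : ZMod 3, e * h - f * g = 1 →
    ∀ a b c d : ZMod 3, a * d - b * c = 1 → ∀ x y : ZMod 3,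
    classInv ((e * a + f * c) * h - (e * b + f * d) * g)
      ((e * b + f * d) * e - (e * a + f * c) * f)
      ((g * a + h * c) * h - (g * b + h * d) * g)
      ((g * b + h * d) * e - (g * a + h * c) * f)
      (e * x + f * y) (g * x + h * y) =
      classInv a b c d x y := by
  decide +kernel

lemma exists_conj_coord : ∀ a b c d : ZMod 3, a * d - b * c = 1 → ∀ x y : ZMod 3,
    ∃ e f g h : ZMod 3, e * h - f * g = 1 ∧
      (let r := repCoord (classInv a b c d x y)
       (e * a + f * c = r.1 * e + r.2.1 * g ∧ e * b + f * d = r.1 * f + r.2.1 * h ∧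
        g * a + h * c = r.2.2.1 * e + r.2.2.2.1 * g ∧
        g * b + h * d = r.2.2.1 * f + r.2.2.2.1 * h) ∧ 
       ∃ u v : ZMod 3, u + (e * x + f * y) = r.2.2.2.2.1 + (r.1 * u + r.2.1 * v) ∧
        v + (g * x + h * y) = r.2.2.2.2.2 + (r.2.2.1 * u + r.2.2.2.1 * v)) := by
  decide +kernel

/-- Build a group element from coordinates. -/
noncomputable def mkElt (a b c d x y : ZMod 3) (hdet : a * d - b * c = 1) : SemidirectGroup 3 :=
  (⟨Multiplicative.ofAdd ![x, y], ⟨!![a, b; c, d], by rw [Matrix.det_fin_two_of]; exact hdet⟩⟩ :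
    SemidirectProduct _ _ (slAction 3))

lemma exists_mkElt (g : SemidirectGroup 3) :
    ∃ a b c d x y, ∃ hdet : a * d - b * c = 1, g = mkElt a b c d x y hdet := by
  obtain ⟨v, A, hA⟩ := g
  have hA2 := hA
  rw [Matrix.det_fin_two] at hA2
  refine ⟨A 0 0, A 0 1, A 1 0, A 1 1, v.toAdd 0, v.toAdd 1, hA2, ?_⟩
  refine SemidirectProduct.ext ?_ ?_
  · change v.toAdd = ![v.toAdd 0, v.toAdd 1]
    ext i; fin_cases i <;> rfl
  · apply Subtype.ext
    exact Matrix.eta_fin_two A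

lemma mkElt_mul (e f g h u v a b c d x y : ZMod 3) (h1 : e * h - f * g = 1)
    (h2 : a * d - b * c = 1)
    (h3 : (e * a + f * c) * (g * b + h * d) - (e * b + f * d) * (g * a + h * c) = 1) :
    mkElt e f g h u v h1 * mkElt a b c d x y h2 =
      mkElt (e * a + f * c) (e * b + f * d) (g * a + h * c) (g * b + h * d)
        (u + (e * x + f * y)) (v + (g * x + h * y)) h3 := by
  refine SemidirectProduct.ext ?_ ?_
  · change ![u, v] + (!![e, f; g, h] *ᵥ ![x, y]) = ![u + (e * x + f * y), v + (g * x + h * y)]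
    ext i; fin_cases i <;> simp <;> ring
  · apply Subtype.ext
    change !![e, f; g, h] * !![a, b; c, d] = _
    rw [Matrix.mul_fin_two]
    rfl

lemma mkElt_congr {a b c d x y a' b' c' d' x' y' : ZMod 3} {h1 : a * d - b * c = 1}
    {h2 : a' * d' - b' * c' = 1} (ha : a = a') (hb : b = b') (hc : c = c') (hd : d = d')
    (hx : x = x') (hy : y = y') : mkElt a b c d x y h1 = mkElt a' b' c' d' x' y' h2 := by
  subst ha hb hc hd hx hy; rfl

/-- The invariant on the group. -/
noncomputable def groupInv (g : SemidirectGroup 3) : Fin 10 :=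
  classInv (g.right.1 0 0) (g.right.1 0 1) (g.right.1 1 0) (g.right.1 1 1)
    (g.left.toAdd 0) (g.left.toAdd 1)

lemma groupInv_mkElt (a b c d x y : ZMod 3) (hdet : a * d - b * c = 1) :
    groupInv (mkElt a b c d x y hdet) = classInv a b c d x y := rfl

/-- Conjugation by a product of a translation and a linear map, in coordinates. -/
lemma groupInv_conj (k g : SemidirectGroup 3) : groupInv (k * g * k⁻¹) = groupInv g := by
  obtain ⟨e, f, g', h, u, v, h1, rfl⟩ := exists_mkElt k
  obtain ⟨a, b, c, d, x, y, h2, rfl⟩ := exists_mkElt g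
  have h3 : ((e * a + f * c) * h - (e * b + f * d) * g') *
      ((g' * b + h * d) * e - (g' * a + h * c) * f) -
      ((e * b + f * d) * e - (e * a + f * c) * f) *
      ((g' * a + h * c) * h - (g' * b + h * d) * g') = 1 := by
    have : (e * h - f * g') ^ 2 * (a * d - b * c) = 1 := by rw [h1, h2]; ring
    rw [← this]; ring
  have h4 : (e * a + f * c) * (g' * b + h * d) - (e * b + f * d) * (g' * a + h * c) = 1 := by
    have : (e * h - f * g') * (a * d - b * c) = 1 := by rw [h1, h2]; ring
    rw [← this]; ring
  rw [groupInv_mkElt, ← classInv_linear e f g' h h1 a b c d h2 x y,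
    ← classInv_translate _ _ _ _ h3 _ _ u v, ← groupInv_mkElt _ _ _ _ _ _ h3]
  congr 1
  rw [mul_inv_eq_iff_eq_mul, mkElt_mul _ _ _ _ _ _ _ _ _ _ _ _ _ _ h4, mkElt_mul]
  · apply mkElt_congr
    · linear_combination (-(e * a + f * c)) * h1
    · linear_combination (-(e * b + f * d)) * h1
    · linear_combination (-(g' * a + h * c)) * h1
    · linear_combination (-(g' * b + h * d)) * h1
    · ring
    · ring
  · have : (e * h - f * g') ^ 3 * (a * d - b * c) = 1 := by rw [h1, h2]; ring
    rw [← this]; ring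

/-- The chosen class representatives. -/
noncomputable def repElt (i : Fin 10) : SemidirectGroup 3 :=
  mkElt _ _ _ _ (repCoord i).2.2.2.2.1 (repCoord i).2.2.2.2.2 (rep_det i)

lemma isConj_repElt (g : SemidirectGroup 3) : IsConj g (repElt (groupInv g)) := by
  obtain ⟨a, b, c, d, x, y, h2, rfl⟩ := exists_mkElt g
  obtain ⟨e, f, g', h, h1, ⟨p1, p2, p3, p4⟩, u, v, p5, p6⟩ :=
    exists_conj_coord a b c d h2 x y
  have h4 : (e * a + f * c) * (g' * b + h * d) - (e * b + f * d) * (g' * a + h * c) = 1 := by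
    have : (e * h - f * g') * (a * d - b * c) = 1 := by rw [h1, h2]; ring
    rw [← this]; ring
  rw [isConj_iff]
  refine ⟨mkElt e f g' h u v h1, ?_⟩
  rw [mul_inv_eq_iff_eq_mul, groupInv_mkElt, repElt, mkElt_mul _ _ _ _ _ _ _ _ _ _ _ _ _ _ h4,
    mkElt_mul]
  · exact mkElt_congr p1 p2 p3 p4 p5 p6
  · rw [← p1, ← p2, ← p3, ← p4]; exact h4

lemma groupInv_repElt (i : Fin 10) : groupInv (repElt i) = i := classInv_rep i

theorem qutrit_clifford_ten_conjugacy_classes :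
    Nat.card (ConjClasses (SemidirectGroup 3)) = 10 := by
  have key : ∀ g h : SemidirectGroup 3, IsConj g h → groupInv g = groupInv h := by
    intro g h hgh
    obtain ⟨k, rfl⟩ := isConj_iff.1 hgh
    exact (groupInv_conj k g).symm
  have e : ConjClasses (SemidirectGroup 3) ≃ Fin 10 :=
    { toFun := Quotient.lift groupInv key
      invFun := fun i => ConjClasses.mk (repElt i)
      left_inv := by
        rintro ⟨g⟩
        exact ConjClasses.mk_eq_mk_iff_isConj.2 (isConj_repElt g).symm
      right_inv := groupInv_repElt }
  rw [Nat.card_congr e, Nat.card_fin]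
end

section
/- Let G be the semidirect product (ZMod 5)² ⋊ SL(2, ZMod 5), where SL(2, ZMod 5) acts on (ZMod 5)² by matrix-vector multiplication. Then G has exactly 14 conjugacy classes. -/
open Matrix

instance : Fact (Nat.Prime 5) := ⟨by norm_num⟩

/-- Entries of fourteen representatives: translation part `(rx, ry)`, matrix `(ra, rb; rc, rd)`. -/
def rx : Fin 14 → ZMod 5 := ![0, 1, 0, 0, 0, 0, 0, 0, 0, 0, 0, 0, 0, 0]
def ry : Fin 14 → ZMod 5 := ![0, 0, 0, 1, 2, 0, 1, 2, 0, 0, 0, 0, 0, 0]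
def ra : Fin 14 → ZMod 5 := ![1, 1, 1, 1, 1, 1, 1, 1, 4, 4, 4, 0, 0, 0]
def rb : Fin 14 → ZMod 5 := ![0, 0, 1, 1, 1, 2, 2, 2, 0, 1, 2, 4, 4, 4]
def rc : Fin 14 → ZMod 5 := ![0, 0, 0, 0, 0, 0, 0, 0, 0, 0, 0, 1, 1, 1]
def rd : Fin 14 → ZMod 5 := ![1, 1, 1, 1, 1, 1, 1, 1, 4, 4, 4, 0, 1, 4]

theorem rdet : ∀ i, ra i * rd i - rb i * rc i = 1 := by decide +kernel

/-- `h F = F' h` for 2x2 matrices given by entries. -/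
abbrev Intertwines (p q r s a b c d a' b' c' d' : ZMod 5) : Prop :=
  p * a + q * c = a' * p + b' * r ∧ p * b + q * d = a' * q + b' * s ∧
  r * a + s * c = c' * p + d' * r ∧ r * b + s * d = c' * q + d' * s

/-- `ψ + h χ = χ' + F' ψ` by entries. -/
abbrev Translates (u v p q r s x y x' y' a' b' c' d' : ZMod 5) : Prop :=
  u + (p * x + q * y) = x' + (a' * u + b' * v) ∧
  v + (r * x + s * y) = y' + (c' * u + d' * v)

/-- Inverse of `rb`, with `0` inverse to `0`. -/
def rbi : Fin 14 → ZMod 5 := ![0, 0, 1, 1, 1, 3, 3, 3, 0, 1, 3, 4, 4, 4]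
/-- Indicator of scalar representatives. -/
def rsc : Fin 14 → ZMod 5 := ![1, 1, 0, 0, 0, 0, 0, 0, 1, 0, 0, 0, 0, 0]

abbrev LinearWitness (a b c d p q r s : ZMod 5) (i : Fin 14) : Prop :=
  p * s - q * r = 1 ∧ Intertwines p q r s a b c d (ra i) (rb i) (rc i) (rd i)

theorem linear_surj_aux : ∀ a b c d : ZMod 5, a * d - b * c = 1 →
    ∃ i : Fin 14, ra i + rd i = a + d ∧ ∃ p q : ZMod 5, LinearWitness a b c d p q
      (rbi i * (p * a + q * c - ra i * p)) (rbi i * (p * b + q * d - ra i * q) + rsc i) i := by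
  decide +kernel

theorem linear_surj (a b c d : ZMod 5) (h : a * d - b * c = 1) :
    ∃ i : Fin 14, ∃ p q r s : ZMod 5, p * s - q * r = 1 ∧
      Intertwines p q r s a b c d (ra i) (rb i) (rc i) (rd i) := by
  obtain ⟨i, -, p, q, hw⟩ := linear_surj_aux a b c d h
  exact ⟨i, p, q, _, _, hw⟩

theorem vector_orbit : ∀ x y : ZMod 5, (x = 0 ∧ y = 0) ∨ ∃ p q : ZMod 5, p * x + q * y = 1 := by
  decide +kernel

theorem affine_surj_aux : ∀ (i : Fin 14) (x y : ZMod 5), i ≤ 1 ∨ ∃ j : Fin 14,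
    (ra i = ra j ∧ rb i = rb j ∧ rc i = rc j ∧ rd i = rd j) ∧
    ∃ e : ZMod 5, e * e = 1 ∧
      ∃ u v : ZMod 5, Translates u v e 0 0 e x y (rx j) (ry j) (ra j) (rb j) (rc j) (rd j) := by
  decide +kernel

theorem reps_one : ∀ i : Fin 14, i ≤ 1 → ra i = 1 ∧ rb i = 0 ∧ rc i = 0 ∧ rd i = 1 := by
  decide +kernel

theorem affine_surj (i : Fin 14) (x y : ZMod 5) : ∃ j : Fin 14,
    ∃ p q r s : ZMod 5, p * s - q * r = 1 ∧
      Intertwines p q r s (ra i) (rb i) (rc i) (rd i) (ra j) (rb j) (rc j) (rd j) ∧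
      ∃ u v : ZMod 5, Translates u v p q r s x y (rx j) (ry j) (ra j) (rb j) (rc j) (rd j) := by
  rcases affine_surj_aux i x y with hi | ⟨j, ⟨h1, h2, h3, h4⟩, e, he, u, v, ht⟩
  · obtain ⟨h1, h2, h3, h4⟩ := reps_one i hi
    rw [h1, h2, h3, h4]
    rcases vector_orbit x y with ⟨rfl, rfl⟩ | ⟨p, q, hpq⟩
    · refine ⟨0, 1, 0, 0, 1, ?_⟩
      obtain ⟨g1, g2, g3, g4⟩ := reps_one 0 (by decide)
      rw [g1, g2, g3, g4]
      exact ⟨by ring, ⟨by ring, by ring, by ring, by ring⟩, 0, 0, by decide, by decide⟩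
    · refine ⟨1, p, q, -y, x, by linear_combination hpq, ?_⟩
      obtain ⟨g1, g2, g3, g4⟩ := reps_one 1 (by decide)
      have k1 : rx 1 = 1 := rfl
      have k2 : ry 1 = 0 := rfl
      rw [g1, g2, g3, g4, k1, k2]
      exact ⟨⟨by ring, by ring, by ring, by ring⟩, 0, 0, by linear_combination hpq, by ring⟩
  · refine ⟨j, e, 0, 0, e, by linear_combination he, ?_, u, v, ht⟩
    rw [h1, h2, h3, h4]
    exact ⟨by ring, by ring, by ring, by ring⟩

theorem reps_inj : ∀ p q r s : ZMod 5, p * s - q * r = 1 → ∀ i j : Fin 14, i < j →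
      ra i + rd i = ra j + rd j →
      Intertwines p q r s (ra i) (rb i) (rc i) (rd i) (ra j) (rb j) (rc j) (rd j) →
      ∀ u v : ZMod 5, ¬ Translates u v p q r s (rx i) (ry i) (rx j) (ry j)
        (ra j) (rb j) (rc j) (rd j) := by
  decide +kernel

/-- The group element with the given entries. -/
noncomputable def mkG (x y a b c d : ZMod 5) (h : a * d - b * c = 1) : SemidirectGroup 5 :=
  (⟨Multiplicative.ofAdd ![x, y], ⟨!![a, b; c, d], by rw [Matrix.det_fin_two_of]; exact h⟩⟩ :
    SemidirectProduct _ _ (slAction 5))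

theorem mkG_surj (g : SemidirectGroup 5) : ∃ x y a b c d h, g = mkG x y a b c d h := by
  obtain ⟨χ, F, hF⟩ := g
  refine ⟨χ.toAdd 0, χ.toAdd 1, F 0 0, F 0 1, F 1 0, F 1 1, ?_, ?_⟩
  · rw [← Matrix.det_fin_two]; exact hF
  · refine SemidirectProduct.ext ?_ ?_
    · change Multiplicative (Fin 2 → ZMod 5) at χ
      apply Multiplicative.toAdd.injective
      funext k
      fin_cases k <;> rfl
    · apply Subtype.ext
      exact Matrix.eta_fin_two F

theorem mkG_mul (x y a b c d h x' y' a' b' c' d' h') :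
    mkG x y a b c d h * mkG x' y' a' b' c' d' h' =
      mkG (x + (a * x' + b * y')) (y + (c * x' + d * y'))
        (a * a' + b * c') (a * b' + b * d') (c * a' + d * c') (c * b' + d * d')
        (by linear_combination (a' * d' - b' * c') * h + h') := by
  refine SemidirectProduct.ext ?_ ?_
  · apply Multiplicative.toAdd.injective
    change ![x, y] + !![a, b; c, d] *ᵥ ![x', y'] = ![_, _]
    funext k
    fin_cases k <;> simp <;> ring
  · apply Subtype.ext
    change !![a, b; c, d] * !![a', b'; c', d'] = !![_, _; _, _]
    simp

theorem mkG_inj (x y a b c d h x' y' a' b' c' d' h') :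
    mkG x y a b c d h = mkG x' y' a' b' c' d' h' ↔
      x = x' ∧ y = y' ∧ a = a' ∧ b = b' ∧ c = c' ∧ d = d' := by
  constructor
  · intro e
    have e1 : ![x, y] = ![x', y'] := congrArg SemidirectProduct.left e
    have e2 : !![a, b; c, d] = !![a', b'; c', d'] :=
      congrArg (fun g => (SemidirectProduct.right g).1) e
    refine ⟨congrFun e1 0, congrFun e1 1, congrFun (congrFun e2 0) 0, congrFun (congrFun e2 0) 1,
      congrFun (congrFun e2 1) 0, congrFun (congrFun e2 1) 1⟩
  · rintro ⟨rfl, rfl, rfl, rfl, rfl, rfl⟩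
    rfl

theorem isConj_mkG (x y a b c d h x' y' a' b' c' d' h') :
    IsConj (mkG x y a b c d h) (mkG x' y' a' b' c' d' h') ↔
      ∃ p q r s, p * s - q * r = 1 ∧ Intertwines p q r s a b c d a' b' c' d' ∧
        ∃ u v, Translates u v p q r s x y x' y' a' b' c' d' := by
  rw [isConj_iff]
  constructor
  · rintro ⟨g, hg⟩
    obtain ⟨u, v, p, q, r, s, hd, rfl⟩ := mkG_surj g
    rw [mul_inv_eq_iff_eq_mul, mkG_mul, mkG_mul, mkG_inj] at hg
    obtain ⟨h1, h2, h3, h4, h5, h6⟩ := hg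
    exact ⟨p, q, r, s, hd, ⟨h3, h4, h5, h6⟩, u, v, h1, h2⟩
  · rintro ⟨p, q, r, s, hd, ⟨h3, h4, h5, h6⟩, u, v, h1, h2⟩
    refine ⟨mkG u v p q r s hd, ?_⟩
    rw [mul_inv_eq_iff_eq_mul, mkG_mul, mkG_mul, mkG_inj]
    exact ⟨h1, h2, h3, h4, h5, h6⟩

/-- The fourteen representatives. -/
noncomputable def rep (i : Fin 14) : SemidirectGroup 5 :=
  mkG (rx i) (ry i) (ra i) (rb i) (rc i) (rd i) (rdet i)

theorem rep_surj (g : SemidirectGroup 5) : ∃ i, IsConj g (rep i) := by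
  obtain ⟨x, y, a, b, c, d, h, rfl⟩ := mkG_surj g
  obtain ⟨i, p, q, r, s, hd, hi⟩ := linear_surj a b c d h
  obtain ⟨j, p', q', r', s', hd', hj, u, v, ht⟩ :=
    affine_surj i (p * x + q * y) (r * x + s * y)
  refine ⟨j, IsConj.trans (b := mkG (p * x + q * y) (r * x + s * y) _ _ _ _ (rdet i)) ?_ ?_⟩
  · rw [isConj_mkG]
    exact ⟨p, q, r, s, hd, hi, 0, 0, by ring, by ring⟩
  · rw [rep, isConj_mkG]
    exact ⟨p', q', r', s', hd', hj, u, v, ht⟩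

theorem rep_not_isConj {i j : Fin 14} (hij : i < j) : ¬ IsConj (rep i) (rep j) := by
  intro hc
  rw [rep, rep, isConj_mkG] at hc
  obtain ⟨p, q, r, s, hd, hi, u, v, ht⟩ := hc
  refine reps_inj p q r s hd i j hij ?_ hi u v ht
  obtain ⟨h1, h2, h3, h4⟩ := hi
  linear_combination s * h1 - r * h2 - q * h3 + p * h4 - (ra i + rd i - ra j - rd j) * hd

theorem ququint_clifford_fourteen_conjugacy_classes :
    Nat.card (ConjClasses (SemidirectGroup 5)) = 14 := by
  have hb : Function.Bijective (fun i : Fin 14 => ConjClasses.mk (rep i)) := by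
    constructor
    · intro i j hij
      have hc : IsConj (rep i) (rep j) := ConjClasses.mk_eq_mk_iff_isConj.1 hij
      rcases lt_trichotomy i j with h | h | h
      · exact absurd hc (rep_not_isConj h)
      · exact h
      · exact absurd hc.symm (rep_not_isConj h)
    · intro k
      obtain ⟨g, rfl⟩ := ConjClasses.exists_rep k
      obtain ⟨i, hi⟩ := rep_surj g
      exact ⟨i, ConjClasses.mk_eq_mk_iff_isConj.2 hi.symm⟩
  rw [← Nat.card_eq_of_bijective _ hb, Nat.card_eq_fintype_card, Fintype.card_fin]
end
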